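/- Let I, J ⊆ ℝ be open intervals and let X : I → ℝ, Y : J → ℝ be C¹ with X(x) ≠ Y(y) for all x ∈ I, y ∈ J. Suppose y : I → J is twice differentiable and solves y'' + (1/(2(X(x) − Y(y))))·(Y'(y) + X'(x)·y' + Y'(y)·(y')² + X'(x)·(y')³) = 0 on I. Then the function x ↦ (Y(y(x)) + X(x)·(y'(x))²)/(1 + (y'(x))²) is constant on I; i.e. it is a quadratic first integral of the common unparametrised geodesic equation of the projectively equivalent Liouville metrics h₁ = (X−Y)(dx² + dy²) and h₂ = (1/Y − 1/X)(dx²/X + dy²/Y). -/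

import Mathlib

/-!
Write `p = y'` and `F = (Y + X p²) / (1 + p²)`, the mean of `Y` and `X` with weights `1 : p²`.
Since `Y ∘ y` has derivative `Y' p`, differentiating `F` along an arbitrary curve gives
`F' = p / (1 + p²)² * (2 (X - Y) p' + (1 + p²) (Y' + X' p))`, and the last factor is the geodesic
equation multiplied by `2 (X - Y)`.
-/

section Liouville

variable {𝕜 : Type*} [NontriviallyNormedField 𝕜] {X Y : 𝕜 → 𝕜}

/-- The first integral of the Liouville metrics given by `X` and `Y`, as a function of the abscissa
`x`, the ordinate `t` and the slope `p` of a curve. At isotropic slopes, `1 + p ^ 2 = 0`, it takes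
the junk value `0`. -/
def liouvilleIntegral (X Y : 𝕜 → 𝕜) (x t p : 𝕜) : 𝕜 :=
  (Y t + X x * p ^ 2) / (1 + p ^ 2)

/-- The left-hand side of the unparametrised geodesic equation of the Liouville metrics given by `X`
and `Y`, at abscissa `x`, ordinate `t`, slope `p` and second derivative `q`. The equation is
multiplied by `2 * (X x - Y t)`, so that it has no division. -/
noncomputable def liouvilleGeodesicExpr (X Y : 𝕜 → 𝕜) (x t p q : 𝕜) : 𝕜 :=
  2 * (X x - Y t) * q + (1 + p ^ 2) * (deriv Y t + deriv X x * p)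

theorem liouvilleGeodesicExpr_eq_zero_iff [NeZero (2 : 𝕜)] {x t : 𝕜} (hXY : X x ≠ Y t) (p q : 𝕜) :
    liouvilleGeodesicExpr X Y x t p q = 0 ↔
      q + (1 / (2 * (X x - Y t))) *
        (deriv Y t + deriv X x * p + deriv Y t * p ^ 2 + deriv X x * p ^ 3) = 0 := by
  have hd : 2 * (X x - Y t) ≠ 0 := mul_ne_zero two_ne_zero (sub_ne_zero.mpr hXY)
  have hexpr : liouvilleGeodesicExpr X Y x t p q = 2 * (X x - Y t) *
      (q + (1 / (2 * (X x - Y t))) *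
        (deriv Y t + deriv X x * p + deriv Y t * p ^ 2 + deriv X x * p ^ 3)) := by
    rw [mul_add, ← mul_assoc, mul_one_div_cancel hd, liouvilleGeodesicExpr]
    ring
  rw [hexpr, mul_eq_zero_iff_left hd]

theorem hasDerivAt_liouvilleIntegral {y p : 𝕜 → 𝕜} {q x : 𝕜}
    (hX : DifferentiableAt 𝕜 X x) (hY : DifferentiableAt 𝕜 Y (y x))
    (hy : HasDerivAt y (p x) x) (hp : HasDerivAt p q x) (hiso : 1 + p x ^ 2 ≠ 0) :
    HasDerivAt (fun s ↦ liouvilleIntegral X Y s (y s) (p s))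
      (p x / (1 + p x ^ 2) ^ 2 * liouvilleGeodesicExpr X Y x (y x) (p x) q) x := by
  have hYy : HasDerivAt (fun s ↦ Y (y s)) (deriv Y (y x) * p x) x := hY.hasDerivAt.comp x hy
  have hsq : HasDerivAt (fun s ↦ p s ^ 2) (2 * p x * q) x := by
    simpa only [Nat.cast_ofNat, Nat.add_one_sub_one, pow_one] using hp.fun_pow 2
  have hnum : HasDerivAt (fun s ↦ Y (y s) + X s * p s ^ 2)
      (deriv Y (y x) * p x + (deriv X x * p x ^ 2 + X x * (2 * p x * q))) x :=
    hYy.fun_add (hX.hasDerivAt.fun_mul hsq)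
  refine (hnum.fun_div (hsq.const_add 1) hiso).congr_deriv ?_
  rw [liouvilleGeodesicExpr, div_mul_eq_mul_div]
  congr 1
  ring

end Liouville

theorem liouville_metrics_first_integral_general {𝕜 : Type*} [RCLike 𝕜] {I : Set 𝕜}
    (hIopen : IsOpen I) (hI : IsPreconnected I) {X Y y : 𝕜 → 𝕜}
    (hX : ∀ x ∈ I, DifferentiableAt 𝕜 X x) (hY : ∀ x ∈ I, DifferentiableAt 𝕜 Y (y x))
    (hy1 : ∀ x ∈ I, DifferentiableAt 𝕜 y x) (hy2 : ∀ x ∈ I, DifferentiableAt 𝕜 (deriv y) x)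
    (hiso : ∀ x ∈ I, 1 + deriv y x ^ 2 ≠ 0)
    (hode : ∀ x ∈ I, liouvilleGeodesicExpr X Y x (y x) (deriv y x) (deriv (deriv y) x) = 0) :
    ∀ x ∈ I, ∀ x' ∈ I, liouvilleIntegral X Y x (y x) (deriv y x) =
      liouvilleIntegral X Y x' (y x') (deriv y x') := by
  have hderiv : ∀ x ∈ I,
      HasDerivAt (fun s ↦ liouvilleIntegral X Y s (y s) (deriv y s)) 0 x := fun x hx ↦ by
    simpa only [hode x hx, mul_zero] using hasDerivAt_liouvilleIntegral (hX x hx) (hY x hx)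
      (hy1 x hx).hasDerivAt (hy2 x hx).hasDerivAt (hiso x hx)
  intro x hx x' hx'
  exact hIopen.is_const_of_deriv_eq_zero hI
    (fun s hs ↦ (hderiv s hs).differentiableAt.differentiableWithinAt)
    (fun s hs ↦ (hderiv s hs).deriv) hx hx'

/-- The quadratic first integral of the unparametrised geodesic equation of the
projectively equivalent Liouville metrics `h₁ = (X−Y)(dx² + dy²)` and
`h₂ = (1/Y − 1/X)(dx²/X + dy²/Y)`: along every solution of
`y'' + (Y' + X'y' + Y'(y')² + X'(y')³)/(2(X − Y)) = 0`, the quantity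
`(Y + X(y')²)/(1 + (y')²)` is constant. -/
theorem liouville_metrics_first_integral
    (I J : Set ℝ) (hIopen : IsOpen I) (hI : I.OrdConnected)
    (hJopen : IsOpen J) (hJ : J.OrdConnected)
    (X Y : ℝ → ℝ)
    (hX : ∀ x ∈ I, DifferentiableAt ℝ X x)
    (hY : ∀ t ∈ J, DifferentiableAt ℝ Y t)
    (hne : ∀ x ∈ I, ∀ t ∈ J, X x ≠ Y t)
    (y : ℝ → ℝ) (hmaps : ∀ x ∈ I, y x ∈ J)
    (hy1 : ∀ x ∈ I, DifferentiableAt ℝ y x)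
    (hy2 : ∀ x ∈ I, DifferentiableAt ℝ (deriv y) x)
    (hode : ∀ x ∈ I,
      deriv (deriv y) x
        + (1 / (2 * (X x - Y (y x)))) *
            (deriv Y (y x) + deriv X x * deriv y x
              + deriv Y (y x) * (deriv y x) ^ 2
              + deriv X x * (deriv y x) ^ 3) = 0) :
    ∀ x ∈ I, ∀ x' ∈ I,
      (Y (y x) + X x * (deriv y x) ^ 2) / (1 + (deriv y x) ^ 2)
        = (Y (y x') + X x' * (deriv y x') ^ 2) / (1 + (deriv y x') ^ 2) := by
  exact liouville_metrics_first_integral_general hIopen hI.isPreconnected hX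
    (fun x hx ↦ hY _ (hmaps x hx)) hy1 hy2 (fun _ _ ↦ by positivity)
    fun x hx ↦ (liouvilleGeodesicExpr_eq_zero_iff (hne x hx _ (hmaps x hx)) _ _).mpr (hode x hx)
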